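/- arXiv:1604.01283 — 2 statements merged into one kernel-verified Lean document; each statement's English description precedes it below -/
import Mathlib

section
/- Let G be a finite group, k a field, and χ a tensor closed subadditive function on the finite dimensional kG-modules. Then Adloc(χ) is a thick subcategory of the category of finite dimensional kG-modules: it is closed under direct summands, and for every short exact sequence 0 → M' → M → M'' → 0 of finite dimensional kG-modules, if two of M, M', M'' belong to Adloc(χ) then so does the third. -/
/-- The composition length of a module (the length of a composition series,
zero if none exists). -/
noncomputable def compLength (R : Type) [Ring R] (M : Type) [AddCommGroup M] [Module R M] : ℕ := by
  classical
  exact if h : ∃ s : CompositionSeries (Submodule R M), s.head = ⊥ ∧ s.last = ⊤ then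
    h.choose.length else 0

/-- A module `M` is endofinite if it has finite composition length over its
endomorphism ring, which acts on `M` by application. -/
def IsEndofinite (A : Type) [Ring A] (M : Type) [AddCommGroup M] [Module A M] : Prop :=
  IsFiniteLength (Module.End A M) M

/-- The subadditive function `χ_M` associated to a module `M`:
`χ_M(X) = ℓ_{End_A(M)} Hom_A(X, M)`, where `End_A(M)` acts by postcomposition. -/
noncomputable def chiMod (A : Type) [Ring A] (M : Type) [AddCommGroup M] [Module A M]
    (X : Type) [AddCommGroup X] [Module A X] : ℕ :=
  compLength (Module.End A M) (X →ₗ[A] M)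

/-- A subadditive function on the finite dimensional (i.e. finitely generated)
modules over a finite dimensional algebra `A`: it depends only on the isomorphism
class, is additive on direct sums, and satisfies `χ(X) + χ(Z) ≥ χ(Y)` for every
exact sequence `X → Y → Z → 0`. -/
def IsSubadditive (A : Type) [Ring A]
    (χ : (X : Type) → [AddCommGroup X] → [Module A X] → ℕ) : Prop :=
  (∀ (X Y : Type) [AddCommGroup X] [Module A X] [AddCommGroup Y] [Module A Y],
      Module.Finite A X → Module.Finite A Y →
      (X ≃ₗ[A] Y) → χ X = χ Y) ∧
  (∀ (X Y : Type) [AddCommGroup X] [Module A X] [AddCommGroup Y] [Module A Y],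
      Module.Finite A X → Module.Finite A Y →
      χ (X × Y) = χ X + χ Y) ∧
  (∀ (X Y Z : Type) [AddCommGroup X] [Module A X] [AddCommGroup Y] [Module A Y]
      [AddCommGroup Z] [Module A Z],
      Module.Finite A X → Module.Finite A Y → Module.Finite A Z →
      ∀ (f : X →ₗ[A] Y) (g : Y →ₗ[A] Z),
      Function.Exact f g → Function.Surjective g → χ Y ≤ χ X + χ Z)

/-- Membership in the additive locus `Adloc(χ)`: `Z` is finite dimensional and
`χ(X) - χ(Y) + χ(Z) = 0` for every short exact sequence `0 → X → Y → Z → 0` of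
finite dimensional modules. -/
def MemAdloc (A : Type) [Ring A]
    (χ : (X : Type) → [AddCommGroup X] → [Module A X] → ℕ)
    (Z : Type) [AddCommGroup Z] [Module A Z] : Prop :=
  Module.Finite A Z ∧
  ∀ (X Y : Type) [AddCommGroup X] [Module A X] [AddCommGroup Y] [Module A Y],
    Module.Finite A X → Module.Finite A Y →
    ∀ (f : X →ₗ[A] Y) (g : Y →ₗ[A] Z),
    Function.Injective f → Function.Exact f g → Function.Surjective g →
    χ X + χ Z = χ Y

/-- The tensor product over `k` of two `kG`-modules, with the diagonal `G`-action. -/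
noncomputable abbrev dtensor (k G : Type) [Field k] [Group G] (M N : Type)
    [AddCommGroup M] [Module (MonoidAlgebra k G) M]
    [AddCommGroup N] [Module (MonoidAlgebra k G) N] : Type :=
  ((Representation.ofModule (k := k) (G := G) M).tprod (Representation.ofModule N)).asModule

/-- The additive group structure on `dtensor`, which is that of the tensor product over `k`. -/
noncomputable instance dtensorAddCommGroup (k G : Type) [Field k] [Group G] (M N : Type)
    [AddCommGroup M] [Module (MonoidAlgebra k G) M]
    [AddCommGroup N] [Module (MonoidAlgebra k G) N] : AddCommGroup (dtensor k G M N) :=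
  @TensorProduct.addCommGroup k _ (RestrictScalars k (MonoidAlgebra k G) M)
    (RestrictScalars k (MonoidAlgebra k G) N) _ _
    (RestrictScalars.module k (MonoidAlgebra k G) M)
    (RestrictScalars.module k (MonoidAlgebra k G) N)

/-- The `kG`-module structure on `dtensor`, which is that of `Representation.asModule`. -/
noncomputable instance dtensorModule (k G : Type) [Field k] [Group G] (M N : Type)
    [AddCommGroup M] [Module (MonoidAlgebra k G) M]
    [AddCommGroup N] [Module (MonoidAlgebra k G) N] :
    @Module (MonoidAlgebra k G) (dtensor k G M N) _
      (dtensorAddCommGroup k G M N).toAddCommMonoid :=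
  Representation.instModuleMonoidAlgebraAsModule
    ((Representation.ofModule (k := k) (G := G) M).tprod (Representation.ofModule N))

/-- A function on `kG`-modules is tensor closed if its additive locus is closed under
tensoring (over `k`, with diagonal `G`-action) with finite dimensional modules. -/
def TensorClosed (k G : Type) [Field k] [Group G]
    (χ : (X : Type) → [AddCommGroup X] → [Module (MonoidAlgebra k G) X] → ℕ) : Prop :=
  ∀ (M N : Type) [AddCommGroup M] [Module (MonoidAlgebra k G) M]
    [AddCommGroup N] [Module (MonoidAlgebra k G) N],
    MemAdloc (MonoidAlgebra k G) χ M → Module.Finite (MonoidAlgebra k G) N →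
    MemAdloc (MonoidAlgebra k G) χ (dtensor k G M N)

/-!
The additive locus is always closed under extensions, and under direct summands because `χ` is
additive. For the remaining two cases, let `0 → M' → M → M'' → 0` be exact. If `M''` lies in the
locus, tensoring `0 → ker ε → kG → k → 0` with `M''` gives `0 → K → P → M'' → 0`, where `K` is in
the locus by tensor closedness and `P = M'' ⊗ kG` is projective because its identity is the trace
of a `k`-linear map. Lifting `P → M''` to `M` yields the short exact sequence
`0 → K → M' × P → M → 0`, so that `M'` is a direct summand of an extension of `M` by `K`. If `M'`
lies in the locus, tensoring `0 → k → kG → coker → 0` with `M'` gives dually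
`0 → M → M'' × I → C → 0` with `I = M' ⊗ kG` injective and `C` in the locus.
-/

section ShortExact

variable {A : Type*} [Ring A] {M' M M'' N K P I C : Type*}
  [AddCommGroup M'] [Module A M'] [AddCommGroup M] [Module A M]
  [AddCommGroup M''] [Module A M''] [AddCommGroup N] [Module A N]
  [AddCommGroup K] [Module A K] [AddCommGroup P] [Module A P]
  [AddCommGroup I] [Module A I] [AddCommGroup C] [Module A C]

/-- The sequence `0 → M' → M → M'' → 0` given by `f` and `g` is short exact. -/
structure IsShortExact (f : M' →ₗ[A] M) (g : M →ₗ[A] M'') : Prop where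
  injective : Function.Injective f
  exact : Function.Exact f g
  surjective : Function.Surjective g

theorem isShortExact_subtype_ker {g : M →ₗ[A] M''} (hg : Function.Surjective g) :
    IsShortExact (LinearMap.ker g).subtype g :=
  ⟨Subtype.val_injective, g.exact_subtype_ker_map, hg⟩

theorem isShortExact_mkQ_range {f : M' →ₗ[A] M} (hf : Function.Injective f) :
    IsShortExact f (LinearMap.range f).mkQ :=
  ⟨hf, f.exact_map_mkQ_range, Submodule.mkQ_surjective _⟩

theorem isShortExact_zero_linearEquiv (e : M ≃ₗ[A] M'') :
    IsShortExact (0 : PUnit →ₗ[A] M) e.toLinearMap :=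
  ⟨Function.injective_of_subsingleton _, fun x ↦ by simp [eq_comm (a := (0 : M))], e.surjective⟩

theorem exists_lift_of_exact {f : M' →ₗ[A] M} {g : M →ₗ[A] M''}
    (hf : Function.Injective f) (hfg : Function.Exact f g) (h : N →ₗ[A] M) (hgh : g ∘ₗ h = 0) :
    ∃ r : N →ₗ[A] M', f ∘ₗ r = h := by
  have h_mem (x : N) : h x ∈ LinearMap.range f := (hfg (h x)).mp (LinearMap.congr_fun hgh x)
  refine ⟨(LinearEquiv.ofInjective f hf).symm ∘ₗ h.codRestrict _ h_mem, LinearMap.ext fun x ↦ ?_⟩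
  exact congrArg Subtype.val ((LinearEquiv.ofInjective f hf).apply_symm_apply ⟨h x, h_mem x⟩)

theorem exists_desc_of_exact {f : M' →ₗ[A] M} {g : M →ₗ[A] M''}
    (hfg : Function.Exact f g) (hg : Function.Surjective g) (h : M →ₗ[A] N) (hhf : h ∘ₗ f = 0) :
    ∃ a : M'' →ₗ[A] N, a ∘ₗ g = h :=
  ⟨(LinearMap.range f).liftQ h (LinearMap.range_le_ker_iff.mpr hhf) ∘ₗ
    (hfg.linearEquivOfSurjective hg).symm, LinearMap.ext fun x ↦ by simp⟩

namespace IsShortExact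

variable {f : M' →ₗ[A] M} {g : M →ₗ[A] M''}

theorem comp_eq_zero (h : IsShortExact f g) : g ∘ₗ f = 0 :=
  h.exact.linearMap_comp_eq_zero

theorem linearEquiv_comp (h : IsShortExact f g) (e : M'' ≃ₗ[A] N) :
    IsShortExact f (e.toLinearMap ∘ₗ g) :=
  ⟨h.injective, h.exact.comp_injective _ e.injective (map_zero e),
    e.surjective.comp h.surjective⟩

theorem comp_linearEquiv (h : IsShortExact f g) (e : N ≃ₗ[A] M') :
    IsShortExact (f ∘ₗ e.toLinearMap) g :=
  ⟨h.injective.comp e.injective, fun x ↦ (h.exact x).trans <| by simp [e.surjective.exists],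
    h.surjective⟩

theorem exists_isShortExact_ker_comp (h : IsShortExact f g) {j : K →ₗ[A] P} {p : P →ₗ[A] M}
    (hp : IsShortExact j p) :
    ∃ (j' : K →ₗ[A] LinearMap.ker (g ∘ₗ p)) (p' : LinearMap.ker (g ∘ₗ p) →ₗ[A] M'),
      IsShortExact j' p' := by
  obtain ⟨p', hp'⟩ := exists_lift_of_exact h.injective h.exact
    (p ∘ₗ (LinearMap.ker (g ∘ₗ p)).subtype) (LinearMap.comp_ker_subtype (g ∘ₗ p))
  have hp'_apply (x) : f (p' x) = p x := LinearMap.congr_fun hp' x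
  have h_mem (x : K) : j x ∈ LinearMap.ker (g ∘ₗ p) := by
    simp [hp.exact.apply_apply_eq_zero]
  refine ⟨j.codRestrict _ h_mem, p', ?_, ?_, ?_⟩
  · exact (LinearMap.injective_codRestrict_iff ..).mpr hp.injective
  · intro x
    rw [← map_eq_zero_iff f h.injective, hp'_apply, hp.exact x]
    simp [Subtype.ext_iff]
  · intro x
    obtain ⟨y, hy⟩ := hp.surjective (f x)
    refine ⟨⟨y, by simp [hy, h.exact.apply_apply_eq_zero]⟩, h.injective ?_⟩
    rw [hp'_apply, hy]

theorem prod_coprod_of_lift {i : K →ₗ[A] P} {q : P →ₗ[A] M''} (hfg : IsShortExact f g)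
    (hiq : IsShortExact i q) {r : K →ₗ[A] M'} {l : P →ₗ[A] M}
    (hl : g ∘ₗ l = q) (hr : f ∘ₗ r = l ∘ₗ i) :
    IsShortExact (r.prod i) (f.coprod (-l)) := by
  have hl_apply (y) : g (l y) = q y := LinearMap.congr_fun hl y
  have hr_apply (x) : f (r x) = l (i x) := LinearMap.congr_fun hr x
  refine ⟨fun x y hxy ↦ hiq.injective (congrArg Prod.snd hxy),
    fun ⟨x, y⟩ ↦ ⟨fun hxy ↦ ?_, ?_⟩, fun m ↦ ?_⟩
  · have hxy' : f x = l y := by simpa [add_neg_eq_zero] using hxy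
    obtain ⟨z, rfl⟩ := (hiq.exact y).mp (by rw [← hl_apply, ← hxy', hfg.exact.apply_apply_eq_zero])
    exact ⟨z, Prod.ext (hfg.injective (by simp [hr_apply, hxy'])) rfl⟩
  · rintro ⟨z, hz⟩
    simp [← hz, hr_apply]
  · obtain ⟨y, hy⟩ := hiq.surjective (g m)
    obtain ⟨x, hx⟩ := (hfg.exact (m + l (-y))).mp (by simp [hl_apply, hy])
    exact ⟨(x, -y), by simp [hx]⟩

theorem prod_coprod_of_extension {j : M' →ₗ[A] I} {q : I →ₗ[A] C} (hfg : IsShortExact f g)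
    (hjq : IsShortExact j q) {e : M →ₗ[A] I} {a : M'' →ₗ[A] C}
    (he : e ∘ₗ f = j) (ha : a ∘ₗ g = q ∘ₗ e) :
    IsShortExact (g.prod e) (a.coprod (-q)) := by
  have he_apply (x) : e (f x) = j x := LinearMap.congr_fun he x
  have ha_apply (x) : a (g x) = q (e x) := LinearMap.congr_fun ha x
  refine ⟨(injective_iff_map_eq_zero _).mpr fun x hx ↦ ?_,
    fun ⟨x, y⟩ ↦ ⟨fun hxy ↦ ?_, ?_⟩, fun c ↦ ?_⟩
  · obtain ⟨z, rfl⟩ := (hfg.exact x).mp (congrArg Prod.fst hx)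
    have : j z = 0 := by simpa [he_apply] using congrArg Prod.snd hx
    rw [(map_eq_zero_iff j hjq.injective).mp this, map_zero]
  · obtain ⟨m, rfl⟩ := hfg.surjective x
    have hq : q (e m) = q y := by simpa [ha_apply, add_neg_eq_zero] using hxy
    obtain ⟨z, hz⟩ := (hjq.exact (y - e m)).mp (by rw [map_sub, hq, sub_self])
    exact ⟨m + f z, by simp [hfg.exact.apply_apply_eq_zero, he_apply, hz]⟩
  · rintro ⟨z, hz⟩
    simp [← hz, ha_apply]
  · obtain ⟨y, hy⟩ := hjq.surjective (-c)
    exact ⟨(0, y), by simp [hy]⟩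

theorem exists_isShortExact_of_projective [Module.Projective A P] {i : K →ₗ[A] P} {q : P →ₗ[A] M''}
    (hfg : IsShortExact f g) (hiq : IsShortExact i q) :
    ∃ (φ : K →ₗ[A] M' × P) (ψ : M' × P →ₗ[A] M), IsShortExact φ ψ := by
  obtain ⟨l, hl⟩ := Module.projective_lifting_property g q hfg.surjective
  obtain ⟨r, hr⟩ := exists_lift_of_exact hfg.injective hfg.exact (l ∘ₗ i)
    (by rw [← LinearMap.comp_assoc, hl, hiq.comp_eq_zero])
  exact ⟨_, _, hfg.prod_coprod_of_lift hiq hl hr⟩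

theorem exists_isShortExact_of_injective.{u, v} {A : Type u} [Ring A] {M' M M'' C : Type*}
    {I : Type v} [Small.{v} A] [AddCommGroup M'] [Module A M'] [AddCommGroup M] [Module A M]
    [AddCommGroup M''] [Module A M''] [AddCommGroup C] [Module A C]
    [AddCommGroup I] [Module A I] [Module.Injective A I]
    {f : M' →ₗ[A] M} {g : M →ₗ[A] M''} {j : M' →ₗ[A] I} {q : I →ₗ[A] C}
    (hfg : IsShortExact f g) (hjq : IsShortExact j q) :
    ∃ (φ : M →ₗ[A] M'' × I) (ψ : M'' × I →ₗ[A] C), IsShortExact φ ψ := by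
  obtain ⟨e, he⟩ := Module.Injective.extension_property A I M' M f hfg.injective j
  obtain ⟨a, ha⟩ := exists_desc_of_exact hfg.exact hfg.surjective (q ∘ₗ e)
    (by rw [LinearMap.comp_assoc, he, hjq.comp_eq_zero])
  exact ⟨_, _, hfg.prod_coprod_of_extension hjq he ha⟩

end IsShortExact

end ShortExact

section Adloc

variable {A : Type} [Ring A] {χ : (X : Type) → [AddCommGroup X] → [Module A X] → ℕ}
  {M' M M'' K P I C : Type}
  [AddCommGroup M'] [Module A M'] [AddCommGroup M] [Module A M]
  [AddCommGroup M''] [Module A M''] [AddCommGroup K] [Module A K]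
  [AddCommGroup P] [Module A P] [AddCommGroup I] [Module A I] [AddCommGroup C] [Module A C]

/-- Additivity of a function `χ` on direct sums of finitely generated modules. -/
def IsProdAdditive (A : Type) [Ring A]
    (χ : (X : Type) → [AddCommGroup X] → [Module A X] → ℕ) : Prop :=
  ∀ (X Y : Type) [AddCommGroup X] [Module A X] [AddCommGroup Y] [Module A Y],
    Module.Finite A X → Module.Finite A Y → χ (X × Y) = χ X + χ Y

namespace MemAdloc

theorem add_eq (hM'' : MemAdloc A χ M'') [Module.Finite A M'] {f : M' →ₗ[A] M} {g : M →ₗ[A] M''}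
    (hfg : IsShortExact f g) : χ M' + χ M'' = χ M :=
  have := hM''.1
  hM''.2 M' M ‹_› (.of_exact hfg.exact hfg.surjective) f g hfg.injective hfg.exact hfg.surjective

theorem of_linearEquiv (hM : MemAdloc A χ M) (e : M ≃ₗ[A] K) : MemAdloc A χ K := by
  have := hM.1
  have h_refl := hM.add_eq (isShortExact_zero_linearEquiv (.refl A M))
  have h_symm := hM.add_eq (isShortExact_zero_linearEquiv e.symm)
  refine ⟨.equiv e, fun X Y _ _ _ _ _ _ f g hf hfg hg ↦ ?_⟩
  have h_add := hM.add_eq ((IsShortExact.mk hf hfg hg).linearEquiv_comp e.symm)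
  lia

theorem fst (hχ : IsProdAdditive A χ) (h : MemAdloc A χ (M × K)) : MemAdloc A χ M := by
  have := h.1
  have : Module.Finite A M := .of_surjective (.fst A M K) Prod.fst_surjective
  have : Module.Finite A K := .of_surjective (.snd A M K) Prod.snd_surjective
  refine ⟨‹_›, fun X Y _ _ _ _ _ _ f g hf hfg hg ↦ ?_⟩
  have h_add : χ X + χ (M × K) = χ (Y × K) :=
    h.add_eq (f := .inl A Y K ∘ₗ f) (g := g.prodMap .id)
      ⟨LinearMap.inl_injective.comp hf, fun ⟨y, z⟩ ↦ ?_, hg.prodMap Function.surjective_id⟩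
  · rw [hχ M K ‹_› ‹_›, hχ Y K ‹_› ‹_›] at h_add
    lia
  · simp [hfg y, eq_comm (a := z)]

variable [IsNoetherianRing A] {f : M' →ₗ[A] M} {g : M →ₗ[A] M''}

theorem of_isShortExact (hM' : MemAdloc A χ M') (hM'' : MemAdloc A χ M'') (h : IsShortExact f g) :
    MemAdloc A χ M := by
  have := hM'.1
  have := hM''.1
  refine ⟨.of_exact h.exact h.surjective, fun X Y _ _ _ _ _ _ j p hj hjp hp ↦ ?_⟩
  obtain ⟨j', p', hjp'⟩ := h.exists_isShortExact_ker_comp (IsShortExact.mk hj hjp hp)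
  have h_ker := isShortExact_subtype_ker (g := g ∘ₗ p) (h.surjective.comp hp)
  have h_add_ker := hM''.add_eq h_ker
  have h_add' := hM'.add_eq hjp'
  have h_add := hM''.add_eq h
  lia

theorem of_projective (hχ : IsProdAdditive A χ) [Module.Projective A P]
    {i : K →ₗ[A] P} {q : P →ₗ[A] M''}
    (hK : MemAdloc A χ K) (hM : MemAdloc A χ M) (hiq : IsShortExact i q) (hfg : IsShortExact f g) :
    MemAdloc A χ M' := by
  obtain ⟨φ, ψ, hφψ⟩ := hfg.exists_isShortExact_of_projective hiq
  exact (hK.of_isShortExact hM hφψ).fst hχ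

theorem of_injective (hχ : IsProdAdditive A χ) [Module.Injective A I]
    {j : M' →ₗ[A] I} {q : I →ₗ[A] C}
    (hM : MemAdloc A χ M) (hC : MemAdloc A χ C) (hfg : IsShortExact f g) (hjq : IsShortExact j q) :
    MemAdloc A χ M'' := by
  obtain ⟨φ, ψ, hφψ⟩ := hfg.exists_isShortExact_of_injective hjq
  exact (hM.of_isShortExact hC hφψ).fst hχ

end MemAdloc

end Adloc

section Higman

open MonoidAlgebra

variable {k G : Type*} [CommRing k] [Group G] [Fintype G]
  {U V W : Type*}
  [AddCommGroup U] [Module k U] [Module k[G] U] [IsScalarTower k k[G] U]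
  [AddCommGroup V] [Module k V] [Module k[G] V] [IsScalarTower k k[G] V]
  [AddCommGroup W] [Module k W] [Module k[G] W] [IsScalarTower k k[G] W]

theorem comp_sumOfConjugatesEquivariant (f : V →ₗ[k[G]] W) (π : U →ₗ[k] V) :
    f ∘ₗ π.sumOfConjugatesEquivariant G =
      (f.restrictScalars k ∘ₗ π).sumOfConjugatesEquivariant G := by
  ext u
  simp [LinearMap.sumOfConjugatesEquivariant_apply, LinearMap.conjugate_apply]

theorem sumOfConjugatesEquivariant_comp (π : V →ₗ[k] W) (f : U →ₗ[k[G]] V) :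
    π.sumOfConjugatesEquivariant G ∘ₗ f =
      (π ∘ₗ f.restrictScalars k).sumOfConjugatesEquivariant G := by
  ext u
  simp [LinearMap.sumOfConjugatesEquivariant_apply, LinearMap.conjugate_apply]

theorem projective_of_sumOfConjugatesEquivariant_eq_id [Module.Projective k V] {θ : V →ₗ[k] V}
    (hθ : θ.sumOfConjugatesEquivariant G = .id) : Module.Projective k[G] V := by
  let q : (V →₀ k[G]) →ₗ[k[G]] V := Finsupp.linearCombination k[G] id
  obtain ⟨s, hs⟩ := Module.projective_lifting_property (q.restrictScalars k) θ
    (Finsupp.linearCombination_id_surjective k[G] V)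
  refine Module.projective_def'.mpr ⟨s.sumOfConjugatesEquivariant G, ?_⟩
  rw [comp_sumOfConjugatesEquivariant, hs, hθ]

theorem injective_of_sumOfConjugatesEquivariant_eq_id.{w} {V : Type w} [AddCommGroup V]
    [Module k V] [Module k[G] V] [IsScalarTower k k[G] V] [Module.Injective k V]
    {θ : V →ₗ[k] V} (hθ : θ.sumOfConjugatesEquivariant G = .id) : Module.Injective k[G] V where
  out X Y _ _ _ _ f hf g := by
    let _ : Module k X := .compHom X (algebraMap k k[G])
    let _ : Module k Y := .compHom Y (algebraMap k k[G])
    have : IsScalarTower k k[G] X := .of_compHom k k[G] X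
    have : IsScalarTower k k[G] Y := .of_compHom k k[G] Y
    obtain ⟨h, hh⟩ := Module.Injective.out (f.restrictScalars k) hf (θ ∘ₗ g.restrictScalars k)
    have h_comp : h ∘ₗ f.restrictScalars k = θ ∘ₗ g.restrictScalars k := LinearMap.ext hh
    have h_extends : h.sumOfConjugatesEquivariant G ∘ₗ f = g := by
      rw [sumOfConjugatesEquivariant_comp, h_comp, ← sumOfConjugatesEquivariant_comp, hθ,
        LinearMap.id_comp]
    exact ⟨h.sumOfConjugatesEquivariant G, LinearMap.congr_fun h_extends⟩

end Higman

section RelativelyProjective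

open MonoidAlgebra Representation

variable {k G V W : Type*} [CommRing k] [Group G] [Fintype G] [AddCommGroup V] [Module k V]
  [AddCommGroup W] [Module k W] {ρ : Representation k G V}

/-- Projectivity of a representation relative to the trivial subgroup, encoded by Higman's
criterion: the identity is the trace of a `k`-linear endomorphism. -/
def IsRelativelyProjective (ρ : Representation k G V) : Prop :=
  ∃ θ : Module.End k V, ∑ g, ρ g⁻¹ * θ * ρ g = 1

variable (k G) in
theorem isRelativelyProjective_leftRegular : IsRelativelyProjective (leftRegular k G) := by
  classical
  refine ⟨MonoidAlgebra.lsingle 1 ∘ₗ Finsupp.lapply 1 ∘ₗ (coeffLinearEquiv k).toLinearMap, ?_⟩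
  ext h : 2
  simp [Finsupp.single_apply, mul_eq_one_iff_eq_inv, apply_ite]

namespace IsRelativelyProjective

theorem tprod {σ : Representation k G W} (hσ : IsRelativelyProjective σ)
    (ρ : Representation k G V) : IsRelativelyProjective (ρ.tprod σ) := by
  obtain ⟨θ, hθ⟩ := hσ
  have h_conj (g : G) : ρ.tprod σ g⁻¹ * θ.lTensor V * ρ.tprod σ g =
      (σ g⁻¹ * θ * σ g).lTensor V := by
    ext
    simp
  refine ⟨θ.lTensor V, ?_⟩
  simp_rw [h_conj, ← LinearMap.coe_lTensorHom, ← map_sum, hθ]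
  exact LinearMap.lTensor_id V W

theorem exists_sumOfConjugatesEquivariant_eq_id (hρ : IsRelativelyProjective ρ) :
    ∃ θ : ρ.asModule →ₗ[k] ρ.asModule, θ.sumOfConjugatesEquivariant G = .id := by
  obtain ⟨θ, hθ⟩ := hρ
  have h_sum (v : V) : ∑ g, ρ g⁻¹ (θ (ρ g v)) = v := by
    simpa using LinearMap.congr_fun hθ v
  refine ⟨ρ.asModuleEquiv.symm.conj θ, LinearMap.ext fun v ↦ ?_⟩
  rw [LinearMap.sumOfConjugatesEquivariant_apply]
  simp only [LinearMap.conjugate_apply, single_smul, one_smul]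
  exact h_sum (ρ.asModuleEquiv v)

theorem projective_asModule [Module.Projective k V] (hρ : IsRelativelyProjective ρ) :
    Module.Projective k[G] ρ.asModule := by
  obtain ⟨θ, hθ⟩ := hρ.exists_sumOfConjugatesEquivariant_eq_id
  have : Module.Projective k ρ.asModule := .of_equiv ρ.asModuleEquiv.symm
  exact projective_of_sumOfConjugatesEquivariant_eq_id hθ

theorem injective_asModule [Module.Injective k V] (hρ : IsRelativelyProjective ρ) :
    Module.Injective k[G] ρ.asModule := by
  obtain ⟨θ, hθ⟩ := hρ.exists_sumOfConjugatesEquivariant_eq_id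
  have : Module.Injective k ρ.asModule := ‹Module.Injective k V›
  exact injective_of_sumOfConjugatesEquivariant_eq_id hθ

end IsRelativelyProjective

end RelativelyProjective

section RepresentationAsModule

open MonoidAlgebra Representation IntertwiningMap

variable {k G U V W X : Type*} [CommSemiring k] [Group G]
  [AddCommMonoid U] [Module k U] [AddCommMonoid V] [Module k V]
  [AddCommMonoid W] [Module k W] [AddCommMonoid X] [Module k X]
  {ρ : Representation k G U} {σ : Representation k G V}
  {ρ' : Representation k G W} {σ' : Representation k G X}

/-- Equivalent representations give isomorphic `k[G]`-modules. -/
noncomputable def equivAsModule (e : ρ.Equiv σ) : ρ.asModule ≃ₗ[k[G]] σ.asModule :=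
  .ofBijective (equivLinearMapAsModule ρ σ e.toIntertwiningMap) (EquivLike.bijective e)

variable (k) in
/-- The module attached to the representation of a `k[G]`-module `M` is `M` itself. -/
noncomputable def asModuleOfModuleEquiv (M : Type*) [AddCommMonoid M] [Module k M] [Module k[G] M]
    [IsScalarTower k k[G] M] : (ofModule' (k := k) (G := G) M).asModule ≃ₗ[k[G]] M where
  toAddEquiv := (ofModule' M).asModuleEquiv.toAddEquiv
  map_smul' r x := LinearMap.congr_fun
    (AlgHom.congr_fun ((lift k (Module.End k M) G).apply_symm_apply (Algebra.lsmul k k M)) r) x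

/-- The representation on the module attached to `ρ` is `ρ` itself. -/
noncomputable def ofModuleAsModuleEquiv (ρ : Representation k G U) :
    (ofModule ρ.asModule).Equiv ρ :=
  .mk
    { (RestrictScalars.addEquiv k k[G] ρ.asModule).trans ρ.asModuleEquiv.toAddEquiv with
      map_smul' := fun c x ↦ LinearMap.congr_fun (ρ.asAlgebraHom.commutes c)
        (ρ.asModuleEquiv (RestrictScalars.addEquiv k k[G] _ x)) }
    fun g ↦ LinearMap.ext fun x ↦
      congrArg (ρ.asModuleEquiv ∘ RestrictScalars.addEquiv ..) (ρ.ofModule_asModule_act g x)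

/-- The tensor product of two equivalences of representations. -/
noncomputable def tprodCongr (e : ρ.Equiv ρ') (f : σ.Equiv σ') :
    (ρ.tprod σ).Equiv (ρ'.tprod σ') :=
  .mk (TensorProduct.congr e.toLinearEquiv f.toLinearEquiv)
    (e.toIntertwiningMap.tensor f.toIntertwiningMap).isIntertwining'

end RepresentationAsModule

section Augmentation

open MonoidAlgebra Representation IntertwiningMap

variable {k G U V W X : Type*} [CommRing k] [Group G]
  [AddCommGroup U] [Module k U] [AddCommGroup V] [Module k V] [AddCommGroup W] [Module k W]
  [AddCommGroup X] [Module k X] {ρ : Representation k G V} {σ : Representation k G W}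
  {τ : Representation k G X}

theorem isShortExact_lTensor (υ : Representation k G U) [Module.Flat k U]
    {f : ρ.IntertwiningMap σ} {g : σ.IntertwiningMap τ}
    (h : IsShortExact f.toLinearMap g.toLinearMap) :
    IsShortExact (equivLinearMapAsModule _ _ (f.lTensor υ))
      (equivLinearMapAsModule _ _ (g.lTensor υ)) :=
  ⟨Module.Flat.lTensor_preserves_injective_linearMap _ h.injective,
    Module.Flat.lTensor_exact U h.exact, LinearMap.lTensor_surjective U h.surjective⟩

variable (k) in
/-- Tensoring the representation of a `k[G]`-module with the trivial one gives back the module. -/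
noncomputable def tprodTrivialEquiv (M : Type*) [AddCommGroup M] [Module k M] [Module k[G] M]
    [IsScalarTower k k[G] M] :
    ((ofModule' (k := k) (G := G) M).tprod (trivial k G k)).asModule ≃ₗ[k[G]] M :=
  (equivAsModule (Representation.TensorProduct.rid k _)).trans (asModuleOfModuleEquiv k M)

variable (k G)

/-- The augmentation `k[G] → k`, sending every group element to `1`. -/
noncomputable def augmentation : (leftRegular k G).IntertwiningMap (trivial k G k) :=
  (leftRegularMapEquiv (trivial k G k)).symm 1

theorem augmentation_surjective : Function.Surjective (augmentation k G) := fun c ↦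
  ⟨single 1 c, by simp [augmentation, leftRegularMapEquiv]⟩

/-- The dual of the augmentation: the map `k → k[G]` sending `1` to the sum of all group
elements. -/
noncomputable def coaugmentation [Fintype G] :
    (trivial k G k).IntertwiningMap (leftRegular k G) where
  toLinearMap := .toSpanSingleton k _ ((leftRegular k G).norm (single 1 1))
  isIntertwining' g := by ext; simp [self_norm_apply]

theorem coaugmentation_injective [Fintype G] : Function.Injective (coaugmentation k G) :=
  Function.LeftInverse.injective (g := fun x ↦ x.coeff 1) fun c ↦ by
    change (c • (leftRegular k G).norm (single 1 1)).coeff 1 = c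
    simp [Representation.norm, coeff_sum]

/-- The kernel of the augmentation, as a representation. -/
noncomputable def augmentationKer :
    Representation k G (LinearMap.ker (augmentation k G).toLinearMap) :=
  (augmentation k G).ker.toRepresentation

/-- The cokernel of the coaugmentation, as a representation. -/
noncomputable def coaugmentationCoker [Fintype G] :
    Representation k G (k[G] ⧸ LinearMap.range (coaugmentation k G).toLinearMap) :=
  (leftRegular k G).quotient _ (coaugmentation k G).range.apply_mem_toSubmodule

theorem exists_isShortExact_augmentation :
    ∃ f : (augmentationKer k G).IntertwiningMap (leftRegular k G),
      IsShortExact f.toLinearMap (augmentation k G).toLinearMap :=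
  ⟨⟨Submodule.subtype _, fun _ ↦ rfl⟩, isShortExact_subtype_ker (augmentation_surjective k G)⟩

theorem exists_isShortExact_coaugmentation [Fintype G] :
    ∃ g : (leftRegular k G).IntertwiningMap (coaugmentationCoker k G),
      IsShortExact (coaugmentation k G).toLinearMap g.toLinearMap :=
  ⟨⟨Submodule.mkQ _, fun _ ↦ rfl⟩, isShortExact_mkQ_range (coaugmentation_injective k G)⟩

end Augmentation

section TensorClosed

open MonoidAlgebra Representation

theorem isNoetherianRing_monoidAlgebra (k G : Type*) [CommRing k] [IsNoetherianRing k] [Group G]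
    [Finite G] : IsNoetherianRing k[G] :=
  have : Module.Finite k k[G] := .equiv (coeffLinearEquiv k).symm
  isNoetherian_of_tower k inferInstance

namespace TensorClosed

variable {k G : Type} [Field k] [Group G]
  {χ : (X : Type) → [AddCommGroup X] → [Module k[G] X] → ℕ}
  {M' M M'' : Type} [AddCommGroup M'] [Module k[G] M'] [AddCommGroup M] [Module k[G] M]
  [AddCommGroup M''] [Module k[G] M''] {f : M' →ₗ[k[G]] M} {g : M →ₗ[k[G]] M''}

theorem memAdloc_tprod {V W : Type} [AddCommGroup V] [Module k V] [AddCommGroup W] [Module k W]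
    [Module.Finite k W] (hT : TensorClosed k G χ) {ρ : Representation k G V}
    (hρ : MemAdloc k[G] χ ρ.asModule) (σ : Representation k G W) :
    MemAdloc k[G] χ (ρ.tprod σ).asModule := by
  have : Module.Finite k[G] σ.asModule := .of_restrictScalars_finite k k[G] _
  exact (hT ρ.asModule σ.asModule hρ this).of_linearEquiv
    (equivAsModule (tprodCongr (ofModuleAsModuleEquiv ρ) (ofModuleAsModuleEquiv σ)))

variable [Finite G]

theorem memAdloc_left (hT : TensorClosed k G χ) (hχ : IsProdAdditive k[G] χ)
    (hM : MemAdloc k[G] χ M) (hM'' : MemAdloc k[G] χ M'') (hfg : IsShortExact f g) :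
    MemAdloc k[G] χ M' := by
  cases nonempty_fintype G
  have := isNoetherianRing_monoidAlgebra k G
  have : Module.Finite k k[G] := .equiv (coeffLinearEquiv k).symm
  let _ : Module k M'' := .compHom M'' (algebraMap k k[G])
  have : IsScalarTower k k[G] M'' := .of_compHom k k[G] M''
  let ρ : Representation k G M'' := ofModule' M''
  have hρ : MemAdloc k[G] χ ρ.asModule := hM''.of_linearEquiv (asModuleOfModuleEquiv k M'').symm
  obtain ⟨i, hi⟩ := exists_isShortExact_augmentation k G
  have h_tprod := (isShortExact_lTensor ρ hi).linearEquiv_comp (tprodTrivialEquiv k M'')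
  have := ((isRelativelyProjective_leftRegular k G).tprod ρ).projective_asModule
  exact (hT.memAdloc_tprod hρ (augmentationKer k G)).of_projective hχ hM h_tprod hfg

theorem memAdloc_right (hT : TensorClosed k G χ) (hχ : IsProdAdditive k[G] χ)
    (hM' : MemAdloc k[G] χ M') (hM : MemAdloc k[G] χ M) (hfg : IsShortExact f g) :
    MemAdloc k[G] χ M'' := by
  cases nonempty_fintype G
  have := isNoetherianRing_monoidAlgebra k G
  have : Module.Finite k k[G] := .equiv (coeffLinearEquiv k).symm
  let _ : Module k M' := .compHom M' (algebraMap k k[G])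
  have : IsScalarTower k k[G] M' := .of_compHom k k[G] M'
  let ρ : Representation k G M' := ofModule' M'
  have hρ : MemAdloc k[G] χ ρ.asModule := hM'.of_linearEquiv (asModuleOfModuleEquiv k M').symm
  obtain ⟨q, hq⟩ := exists_isShortExact_coaugmentation k G
  have h_tprod := (isShortExact_lTensor ρ hq).comp_linearEquiv (tprodTrivialEquiv k M').symm
  have := Module.injective_of_isSemisimpleRing k (TensorProduct k M' k[G])
  have := ((isRelativelyProjective_leftRegular k G).tprod ρ).injective_asModule
  exact hM.of_injective hχ (hT.memAdloc_tprod hρ (coaugmentationCoker k G)) hfg h_tprod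

end TensorClosed

end TensorClosed

/-- Thickness of a class `P` of modules inside the finitely generated modules: closure under direct
summands and the two-out-of-three property for short exact sequences. -/
def IsThick (A : Type) [Ring A] (P : (X : Type) → [AddCommGroup X] → [Module A X] → Prop) : Prop :=
  (∀ (X Y : Type) [AddCommGroup X] [Module A X] [AddCommGroup Y] [Module A Y],
    Module.Finite A X → Module.Finite A Y → P (X × Y) → P X) ∧
  (∀ (M' M M'' : Type) [AddCommGroup M'] [Module A M'] [AddCommGroup M] [Module A M]
    [AddCommGroup M''] [Module A M''],
    Module.Finite A M' → Module.Finite A M → Module.Finite A M'' →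
    ∀ (f : M' →ₗ[A] M) (g : M →ₗ[A] M''),
    Function.Injective f → Function.Exact f g → Function.Surjective g →
    (P M' ∧ P M → P M'') ∧ (P M' ∧ P M'' → P M) ∧ (P M ∧ P M'' → P M'))

theorem statement5_general (k G : Type) [Field k] [Group G] [Finite G]
    (χ : (X : Type) → [AddCommGroup X] → [Module (MonoidAlgebra k G) X] → ℕ)
    (hχ : IsProdAdditive (MonoidAlgebra k G) χ) (hT : TensorClosed k G χ) :
    IsThick (MonoidAlgebra k G) (MemAdloc (MonoidAlgebra k G) χ) := by
  have := isNoetherianRing_monoidAlgebra k G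
  refine ⟨fun X Y _ _ _ _ _ _ hXY ↦ hXY.fst hχ, fun M' M M'' _ _ _ _ _ _ _ _ _ f g hf hfg hg ↦ ?_⟩
  have h : IsShortExact f g := ⟨hf, hfg, hg⟩
  exact ⟨fun ⟨hM', hM⟩ ↦ hT.memAdloc_right hχ hM' hM h,
    fun ⟨hM', hM''⟩ ↦ hM'.of_isShortExact hM'' h,
    fun ⟨hM, hM''⟩ ↦ hT.memAdloc_left hχ hM hM'' h⟩

/-- For a finite group `G`, a field `k` and a tensor closed subadditive
function `χ` on the finite dimensional `kG`-modules, the additive locus `Adloc(χ)` is a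
thick subcategory: it is closed under direct summands and satisfies two-out-of-three for
short exact sequences. -/
theorem statement5 (k G : Type) [Field k] [Group G] [Finite G]
    (χ : (X : Type) → [AddCommGroup X] → [Module (MonoidAlgebra k G) X] → ℕ)
    (hχ : IsSubadditive (MonoidAlgebra k G) χ) (hT : TensorClosed k G χ) :
    (∀ (X Y : Type) [AddCommGroup X] [Module (MonoidAlgebra k G) X]
        [AddCommGroup Y] [Module (MonoidAlgebra k G) Y],
        Module.Finite (MonoidAlgebra k G) X → Module.Finite (MonoidAlgebra k G) Y →
        MemAdloc (MonoidAlgebra k G) χ (X × Y) → MemAdloc (MonoidAlgebra k G) χ X) ∧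
    (∀ (M' M M'' : Type) [AddCommGroup M'] [Module (MonoidAlgebra k G) M']
        [AddCommGroup M] [Module (MonoidAlgebra k G) M]
        [AddCommGroup M''] [Module (MonoidAlgebra k G) M''],
        Module.Finite (MonoidAlgebra k G) M' → Module.Finite (MonoidAlgebra k G) M →
        Module.Finite (MonoidAlgebra k G) M'' →
        ∀ (f : M' →ₗ[MonoidAlgebra k G] M) (g : M →ₗ[MonoidAlgebra k G] M''),
        Function.Injective f → Function.Exact f g → Function.Surjective g →
        ((MemAdloc (MonoidAlgebra k G) χ M' ∧ MemAdloc (MonoidAlgebra k G) χ M →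
            MemAdloc (MonoidAlgebra k G) χ M'') ∧
         (MemAdloc (MonoidAlgebra k G) χ M' ∧ MemAdloc (MonoidAlgebra k G) χ M'' →
            MemAdloc (MonoidAlgebra k G) χ M) ∧
         (MemAdloc (MonoidAlgebra k G) χ M ∧ MemAdloc (MonoidAlgebra k G) χ M'' →
            MemAdloc (MonoidAlgebra k G) χ M'))) :=
  statement5_general k G χ hχ.2.1 hT
end

section
/- Let k be a field of characteristic p > 0, G a finite group, K/k a field extension, B = K[t]/(t^p), and α : B → KG a K-algebra homomorphism (KG the group algebra of G over K) such that KG is flat as a B-module via α. Define χ_α on finite dimensional kG-modules by χ_α(M) = dim_K Hom_B(α^*(M ⊗_k K), K), where M ⊗_k K is the KG-module obtained by base change, α^* denotes restriction of scalars along α, and K = B/(t) is the one-dimensional B-module with t acting as 0. Then χ_α is a subadditive function, and its additive locus Adloc(χ_α) equals Thick(α) := { M finite dimensional kG-module : α^*(M ⊗_k K) is a projective B-module }. -/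
open Polynomial

/-- The truncated polynomial algebra `B = K[t]/(t^p)`. -/
noncomputable abbrev Bp (K : Type) [Field K] (p : ℕ) : Type :=
  AdjoinRoot ((X : K[X]) ^ p)

/-- The algebra map `B → K` sending `t` to `0`, exhibiting `K = B/(t)` as a `B`-module. -/
noncomputable def resB (K : Type) [Field K] (p : ℕ) (hp : p ≠ 0) : Bp K p →ₐ[K] K :=
  AdjoinRoot.liftAlgHom _ (Algebra.ofId K K) 0 (by simp [zero_pow hp])

/-- Base change of a `kG`-module `M` to a representation of `G` over `K`. -/
noncomputable def rhoK (k K G : Type) [Field k] [Field K] [Algebra k K] [Group G]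
    (M : Type) [AddCommGroup M] [Module (MonoidAlgebra k G) M] :
    Representation K G
      (TensorProduct k K (RestrictScalars k (MonoidAlgebra k G) M)) :=
  MonoidHom.comp
    (Module.End.baseChangeHom k K
      (RestrictScalars k (MonoidAlgebra k G) M)).toRingHom.toMonoidHom
    (Representation.ofModule M)

/-- The base-changed module `M ⊗_k K`, as a module over `KG = MonoidAlgebra K G`. -/
noncomputable abbrev MK (k K G : Type) [Field k] [Field K] [Algebra k K] [Group G]
    (M : Type) [AddCommGroup M] [Module (MonoidAlgebra k G) M] : Type :=
  (rhoK k K G M).asModule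

/-- `χ_α(M) = dim_K Hom_B(α^*(M ⊗_k K), K)`, where `α^*` is restriction along `α`. -/
noncomputable def chiAlpha (k K G : Type) [Field k] [Field K] [Algebra k K] [Group G]
    (p : ℕ) (hp : p ≠ 0) (α : Bp K p →ₐ[K] MonoidAlgebra K G)
    (M : Type) [AddCommGroup M] [Module (MonoidAlgebra k G) M] : ℕ :=
  letI : Module (Bp K p) (MK k K G M) := Module.compHom _ α.toRingHom
  letI : Module (Bp K p) K := Module.compHom K (resB K p hp).toRingHom
  haveI : SMulCommClass (Bp K p) K K :=
    ⟨fun b c x => by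
      show resB K p hp b * (c * x) = c * (resB K p hp b * x); ring⟩
  Module.finrank K ((MK k K G M) →ₗ[Bp K p] K)

/-- `M` belongs to `Thick(α)`: `M` is finite dimensional and `α^*(M ⊗_k K)` is a
projective `B`-module. -/
def MemThick (k K G : Type) [Field k] [Field K] [Algebra k K] [Group G]
    (p : ℕ) (α : Bp K p →ₐ[K] MonoidAlgebra K G)
    (M : Type) [AddCommGroup M] [Module (MonoidAlgebra k G) M] : Prop :=
  Module.Finite (MonoidAlgebra k G) M ∧
  (letI : Module (Bp K p) (MK k K G M) := Module.compHom _ α.toRingHom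
   Module.Projective (Bp K p) (MK k K G M))

/-!
Write `M_K` for `M ⊗_k K`. The space `Hom_B(N, K)` is the `K`-dual of `K ⊗_B N`, so `χ_α(M)` is the
dimension of `K ⊗_B α^* M_K`. Right exactness of `K ⊗_B -` makes `χ_α` subadditive, and a sequence
`X → Y → Z → 0` gives an equality exactly when `K ⊗_B α^* X_K → K ⊗_B α^* Y_K` is injective. This
is automatic for a short exact sequence if `α^* Z_K` is flat. Conversely, take `Y` to be a finite
free `kG`-module mapping onto `Z`: then `Y_K` is `KG`-free, so `α^* Y_K` is `B`-flat because `α` is,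
and over the local ring `B` with residue field `K` the injectivity forces `α^* Z_K` to be free.
-/

open scoped TensorProduct

/-- The module `α^* N` obtained from an `A`-module `N` by restriction of scalars along an algebra
homomorphism `α : B → A`. It is a type synonym, so that `α` determines the `B`-action; since `A` is
not assumed commutative, `α` does not make `A` a `B`-algebra. -/
@[nolint unusedArguments]
def RestrictAlong {K B A : Type*} [CommSemiring K] [Semiring B] [Semiring A] [Algebra K B]
    [Algebra K A] (_ : B →ₐ[K] A) (N : Type*) : Type _ :=
  N

namespace RestrictAlong

variable {K B A : Type*} [CommRing K] [Ring A] [Algebra K A]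

section Ring

variable [Ring B] [Algebra K B] (α : B →ₐ[K] A)
variable {N N' : Type*} [AddCommGroup N] [Module A N] [AddCommGroup N'] [Module A N']

instance : AddCommGroup (RestrictAlong α N) := inferInstanceAs (AddCommGroup N)

instance : Module B (RestrictAlong α N) := Module.compHom N α.toRingHom

theorem finite [Module K N] [IsScalarTower K A N] [Module.Finite K N] :
    Module.Finite B (RestrictAlong α N) := by
  let _ : Module K (RestrictAlong α N) := inferInstanceAs (Module K N)
  have : Module.Finite K (RestrictAlong α N) := inferInstanceAs (Module.Finite K N)
  have : IsScalarTower K B (RestrictAlong α N) := ⟨fun c b (x : N) ↦ by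
    change α (c • b) • x = c • (α b • x)
    rw [map_smul, smul_assoc]⟩
  exact .of_restrictScalars_finite K B _

/-- An `A`-linear map `f`, regarded as a `B`-linear map `α^* f`. -/
def map (f : N →ₗ[A] N') : RestrictAlong α N →ₗ[B] RestrictAlong α N' where
  toFun := f
  map_add' := f.map_add
  map_smul' b := f.map_smul (α b)

end Ring

theorem flat_of_free [CommRing B] [Algebra K B] (α : B →ₐ[K] A)
    [Module.Flat B (RestrictAlong α A)] (N : Type*) [AddCommGroup N] [Module A N]
    [Module.Free A N] : Module.Flat B (RestrictAlong α N) := by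
  let e := (Module.Free.chooseBasis A N).repr
  let e' : RestrictAlong α N ≃ₗ[B] (Module.Free.ChooseBasisIndex A N →₀ RestrictAlong α A) :=
    { e with map_smul' b x := e.map_smul (α b) x }
  classical
  exact .of_linearEquiv (e'.trans (finsuppLEquivDirectSum B (RestrictAlong α A) _))

end RestrictAlong

section Local

theorem isLocalHom_of_ker_le_nilradical {R S : Type*} [CommRing R] [CommRing S] (f : R →+* S)
    (hf : Function.Surjective f) (hker : RingHom.ker f ≤ nilradical R) : IsLocalHom f where
  map_nonunit a ha := by
    obtain ⟨b, hb⟩ := hf (Ring.inverse (f a))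
    have hnil : IsNilpotent (a * b - 1) := hker <| by
      simp [RingHom.mem_ker, hb, Ring.mul_inverse_cancel _ ha]
    have hunit : IsUnit (a * b) := by simpa using hnil.isUnit_add_one
    exact isUnit_of_mul_isUnit_left hunit

variable {B K : Type*} [CommRing B] [IsLocalRing B] [Field K] [Algebra B K]

theorem nonempty_residueField_linearEquiv (hK : Function.Surjective (algebraMap B K)) :
    Nonempty (IsLocalRing.ResidueField B ≃ₗ[B] K) := by
  have hmax : IsLocalRing.maximalIdeal B = RingHom.ker (Algebra.ofId B K) :=
    (IsLocalRing.eq_maximalIdeal (RingHom.ker_isMaximal_of_surjective _ hK)).symm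
  exact ⟨((Ideal.quotientEquivAlgOfEq B hmax).trans
    (Ideal.quotientKerAlgEquivOfSurjective hK)).toLinearEquiv⟩

variable {X Y Z : Type*} [AddCommGroup X] [Module B X] [AddCommGroup Y] [Module B Y]
  [AddCommGroup Z] [Module B Z]

theorem free_of_lTensor_injective (hK : Function.Surjective (algebraMap B K)) [Module.Finite B X]
    [Module.Finite B Y] [Module.Flat B Y] {f : X →ₗ[B] Y} {g : Y →ₗ[B] Z}
    (hfg : Function.Exact f g) (hg : Function.Surjective g)
    (hf : Function.Injective (f.lTensor K)) : Module.Free B Z := by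
  obtain ⟨e⟩ := nonempty_residueField_linearEquiv hK
  have : Module.Free B Y := Module.free_of_flat_of_isLocalRing
  refine Module.free_of_lTensor_residueField_injective f g hg hfg ?_
  have hcomm : e.toLinearMap.rTensor Y ∘ₗ f.lTensor _ = f.lTensor K ∘ₗ e.toLinearMap.rTensor X := by
    rw [LinearMap.rTensor_comp_lTensor, LinearMap.lTensor_comp_rTensor]
  have hcomp : Function.Injective (e.toLinearMap.rTensor Y ∘ₗ f.lTensor _) := by
    rw [hcomm]
    exact hf.comp (e.rTensor X).injective
  exact .of_comp hcomp

end Local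

section HomRank

open Module

theorem finrank_eq_finrank_range_add_of_exact {K U V W : Type*} [Field K] [AddCommGroup U]
    [Module K U] [AddCommGroup V] [Module K V] [AddCommGroup W] [Module K W] [Module.Finite K V]
    {f : U →ₗ[K] V} {g : V →ₗ[K] W} (hfg : Function.Exact f g) (hg : Function.Surjective g) :
    finrank K V = finrank K (LinearMap.range f) + finrank K W := by
  rw [← g.finrank_range_add_finrank_ker, LinearMap.range_eq_top.2 hg, finrank_top,
    hfg.linearMap_ker_eq, add_comm]

variable {B K : Type*} [CommRing B] [Field K] [Algebra B K]
variable {X Y Z : Type*} [AddCommGroup X] [Module B X] [AddCommGroup Y] [Module B Y]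
  [AddCommGroup Z] [Module B Z]

variable (K X) in
theorem finrank_hom_eq_finrank_tensor : finrank K (X →ₗ[B] K) = finrank K (K ⊗[B] X) :=
  (LinearMap.liftBaseChangeEquiv K).finrank_eq.trans Subspace.dual_finrank_eq

variable [Module.Finite B Y] {f : X →ₗ[B] Y} {g : Y →ₗ[B] Z}

theorem finrank_hom_eq_finrank_range_add (hfg : Function.Exact f g) (hg : Function.Surjective g) :
    finrank K (Y →ₗ[B] K) =
      finrank K (LinearMap.range (f.baseChange K)) + finrank K (Z →ₗ[B] K) := by
  simp only [finrank_hom_eq_finrank_tensor]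
  exact finrank_eq_finrank_range_add_of_exact (g := g.baseChange K)
    (lTensor_exact K hfg hg) (LinearMap.lTensor_surjective K hg)

variable [Module.Finite B X]

theorem finrank_hom_le_add (hfg : Function.Exact f g) (hg : Function.Surjective g) :
    finrank K (Y →ₗ[B] K) ≤ finrank K (X →ₗ[B] K) + finrank K (Z →ₗ[B] K) := by
  rw [finrank_hom_eq_finrank_range_add hfg hg, finrank_hom_eq_finrank_tensor K X]
  gcongr
  exact LinearMap.finrank_range_le _

theorem finrank_hom_eq_add_iff_lTensor_injective (hfg : Function.Exact f g)
    (hg : Function.Surjective g) :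
    finrank K (Y →ₗ[B] K) = finrank K (X →ₗ[B] K) + finrank K (Z →ₗ[B] K) ↔
      Function.Injective (f.lTensor K) := by
  rw [finrank_hom_eq_finrank_range_add hfg hg, finrank_hom_eq_finrank_tensor K X,
    add_left_inj, eq_comm]
  change _ ↔ Function.Injective (f.baseChange K)
  refine ⟨fun h ↦ ?_, fun h ↦ (LinearMap.finrank_range_of_inj h).symm⟩
  have := (f.baseChange K).finrank_range_add_finrank_ker
  rw [← LinearMap.ker_eq_bot, ← Submodule.finrank_eq_zero]
  lia

end HomRank

theorem free_of_basis_smul {ι κ K A N : Type*} [CommRing K] [Ring A] [Algebra K A] [AddCommGroup N]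
    [Module K N] [Module A N] [IsScalarTower K A N] (b : Module.Basis κ K A) (v : ι → N)
    (d : Module.Basis (κ × ι) K N) (hd : ∀ j i, d (j, i) = b j • v i) : Module.Free A N := by
  let e := (b.smulTower (Finsupp.basisSingleOne (R := A) (ι := ι))).equiv d (.refl _)
  have he : (Finsupp.linearCombination A v).restrictScalars K = e.toLinearMap :=
    (b.smulTower Finsupp.basisSingleOne).ext fun ⟨j, i⟩ ↦ by
      have : e _ = d (j, i) := Module.Basis.equiv_apply _ (j, i) d _
      simpa [Module.Basis.smulTower_apply, hd] using this.symm
  have hbij : Function.Bijective (Finsupp.linearCombination A v) := by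
    convert e.bijective using 1
    exact congrArg DFunLike.coe he
  exact .of_equiv (LinearEquiv.ofBijective _ hbij)

namespace MK

variable {k K G : Type} [Field k] [Field K] [Algebra k K] [Group G]
variable {X Y Z : Type} [AddCommGroup X] [Module (MonoidAlgebra k G) X]
  [AddCommGroup Y] [Module (MonoidAlgebra k G) Y] [AddCommGroup Z] [Module (MonoidAlgebra k G) Z]

/-- The `k`-linear map underlying a `kG`-linear map. -/
noncomputable def restrictScalarsMap (f : X →ₗ[MonoidAlgebra k G] Y) :
    RestrictScalars k (MonoidAlgebra k G) X →ₗ[k] RestrictScalars k (MonoidAlgebra k G) Y where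
  toFun := f
  map_add' := f.map_add
  map_smul' c := f.map_smul (algebraMap k (MonoidAlgebra k G) c)

variable (K) in
/-- The `KG`-linear map `f ⊗ K` induced by a `kG`-linear map `f`. -/
noncomputable def map (f : X →ₗ[MonoidAlgebra k G] Y) :
    MK k K G X →ₗ[MonoidAlgebra K G] MK k K G Y :=
  Representation.IntertwiningMap.equivLinearMapAsModule (rhoK k K G X) (rhoK k K G Y)
    ⟨(restrictScalarsMap f).baseChange K, fun g ↦ by
      ext x
      exact congrArg (TensorProduct.mk k K (RestrictScalars k (MonoidAlgebra k G) Y) 1)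
        (f.map_smul (MonoidAlgebra.single g 1) x)⟩

theorem map_id : map K (LinearMap.id : X →ₗ[MonoidAlgebra k G] X) = LinearMap.id := by
  ext x
  exact LinearMap.congr_fun
    (LinearMap.baseChange_id (R := k) (A := K) (M := RestrictScalars k (MonoidAlgebra k G) X)) x

theorem map_comp (g : Y →ₗ[MonoidAlgebra k G] Z) (f : X →ₗ[MonoidAlgebra k G] Y) :
    map K (g ∘ₗ f) = map K g ∘ₗ map K f := by
  ext x
  exact LinearMap.congr_fun
    (LinearMap.baseChange_comp (A := K) (restrictScalarsMap f) (restrictScalarsMap g)) x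

theorem map_injective {f : X →ₗ[MonoidAlgebra k G] Y} (hf : Function.Injective f) :
    Function.Injective (map K f) :=
  Module.Flat.lTensor_preserves_injective_linearMap (M := K) (restrictScalarsMap f) hf

theorem map_surjective {f : X →ₗ[MonoidAlgebra k G] Y} (hf : Function.Surjective f) :
    Function.Surjective (map K f) :=
  LinearMap.lTensor_surjective K (g := restrictScalarsMap f) hf

theorem map_exact {f : X →ₗ[MonoidAlgebra k G] Y} {g : Y →ₗ[MonoidAlgebra k G] Z}
    (hfg : Function.Exact f g) : Function.Exact (map K f) (map K g) :=
  -- The additive groups carried by `RestrictScalars` unify only after unfolding, so instance search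
  -- does not find the module structures.
  @Module.Flat.lTensor_exact k K _ _ _ _ (RestrictScalars k (MonoidAlgebra k G) X)
    (RestrictScalars k (MonoidAlgebra k G) Y) (RestrictScalars k (MonoidAlgebra k G) Z) _ _ _
    (RestrictScalars.module k (MonoidAlgebra k G) X)
    (RestrictScalars.module k (MonoidAlgebra k G) Y)
    (RestrictScalars.module k (MonoidAlgebra k G) Z)
    (restrictScalarsMap f) (restrictScalarsMap g) hfg

variable (k K G X) in
theorem finite [Finite G] [Module.Finite (MonoidAlgebra k G) X] :
    Module.Finite K (MK k K G X) := by
  let _ := RestrictScalars.moduleOrig k (MonoidAlgebra k G) X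
  have : Module.Finite (MonoidAlgebra k G) (RestrictScalars k (MonoidAlgebra k G) X) :=
    ‹Module.Finite (MonoidAlgebra k G) X›
  have : Module.Finite k (RestrictScalars k (MonoidAlgebra k G) X) := .trans (MonoidAlgebra k G) _
  infer_instance

variable (k K G X) in
theorem free [Module.Free (MonoidAlgebra k G) X] :
    Module.Free (MonoidAlgebra K G) (MK k K G X) := by
  let _ := RestrictScalars.moduleOrig k (MonoidAlgebra k G) X
  have : Module.Free (MonoidAlgebra k G) (RestrictScalars k (MonoidAlgebra k G) X) :=
    ‹Module.Free (MonoidAlgebra k G) X›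
  let c := Module.Free.chooseBasis (MonoidAlgebra k G) (RestrictScalars k (MonoidAlgebra k G) X)
  let e := (rhoK k K G X).asModuleEquiv.symm
  let d := (((MonoidAlgebra.basis G k).smulTower c).baseChange K).map e
  refine free_of_basis_smul (MonoidAlgebra.basis G K) (fun i ↦ e (1 ⊗ₜ[k] c i)) d fun g i ↦ ?_
  have hact : MonoidAlgebra.single g (1 : K) • e (1 ⊗ₜ[k] c i) =
      e (1 ⊗ₜ[k] (MonoidAlgebra.single g (1 : k) • c i)) := by
    rw [Representation.single_smul, one_smul]
    rfl
  simp only [d, hact, Module.Basis.map_apply, Module.Basis.baseChange_apply,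
    Module.Basis.smulTower_apply, MonoidAlgebra.basis_apply]

end MK

section RestrictMK

variable (k : Type) {K G : Type} {B : Type*} [Field k] [Field K] [Algebra k K] [Group G]
  [CommRing B] [Algebra K B] (α : B →ₐ[K] MonoidAlgebra K G)

/-- The `B`-module `α^*(M ⊗_k K)` attached to a `kG`-module `M`. -/
abbrev RestrictMK (M : Type) [AddCommGroup M] [Module (MonoidAlgebra k G) M] : Type :=
  RestrictAlong α (MK k K G M)

/-- The function `χ_α(M) = dim_K Hom_B(α^*(M ⊗_k K), K)`, for an algebra `B` in place of
`K[t]/(t^p)` and any `B`-algebra structure on `K`. -/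
noncomputable def homDim [Algebra B K] (M : Type) [AddCommGroup M]
    [Module (MonoidAlgebra k G) M] : ℕ :=
  Module.finrank K (RestrictMK k α M →ₗ[B] K)

variable {k}
variable {X Y Z : Type} [AddCommGroup X] [Module (MonoidAlgebra k G) X]
  [AddCommGroup Y] [Module (MonoidAlgebra k G) Y] [AddCommGroup Z] [Module (MonoidAlgebra k G) Z]

namespace RestrictMK

/-- The `B`-linear map `α^*(f ⊗ K)` induced by a `kG`-linear map `f`. -/
noncomputable def map (f : X →ₗ[MonoidAlgebra k G] Y) : RestrictMK k α X →ₗ[B] RestrictMK k α Y :=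
  RestrictAlong.map α (MK.map K f)

theorem map_comp_map_eq_id {f : X →ₗ[MonoidAlgebra k G] Y} {r : Y →ₗ[MonoidAlgebra k G] X}
    (h : r ∘ₗ f = .id) : map α r ∘ₗ map α f = .id := by
  ext x
  have hmap : MK.map K r ∘ₗ MK.map K f = .id := by rw [← MK.map_comp, h, MK.map_id]
  exact LinearMap.congr_fun hmap x

theorem map_injective {f : X →ₗ[MonoidAlgebra k G] Y} (hf : Function.Injective f) :
    Function.Injective (map α f) :=
  MK.map_injective hf

theorem map_surjective {f : X →ₗ[MonoidAlgebra k G] Y} (hf : Function.Surjective f) :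
    Function.Surjective (map α f) :=
  MK.map_surjective hf

theorem map_exact {f : X →ₗ[MonoidAlgebra k G] Y} {g : Y →ₗ[MonoidAlgebra k G] Z}
    (hfg : Function.Exact f g) : Function.Exact (map α f) (map α g) :=
  MK.map_exact (K := K) hfg

instance finite [Finite G] [Module.Finite (MonoidAlgebra k G) X] :
    Module.Finite B (RestrictMK k α X) :=
  have := MK.finite k K G X
  RestrictAlong.finite α

theorem flat_of_free [Module.Flat B (RestrictAlong α (MonoidAlgebra K G))]
    [Module.Free (MonoidAlgebra k G) X] : Module.Flat B (RestrictMK k α X) :=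
  have := MK.free k K G X
  RestrictAlong.flat_of_free α _

end RestrictMK

variable [Algebra B K]

theorem homDim_eq_of_linearEquiv (e : X ≃ₗ[MonoidAlgebra k G] Y) :
    homDim k α X = homDim k α Y :=
  let e' := LinearEquiv.ofBijective (RestrictMK.map α e.toLinearMap)
    ⟨RestrictMK.map_injective α e.injective, RestrictMK.map_surjective α e.surjective⟩
  (e'.congrLeft K K).finrank_eq

variable [Finite G] [Module.Finite (MonoidAlgebra k G) X] [Module.Finite (MonoidAlgebra k G) Y]
  {f : X →ₗ[MonoidAlgebra k G] Y} {g : Y →ₗ[MonoidAlgebra k G] Z}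

theorem homDim_le_add (hfg : Function.Exact f g) (hg : Function.Surjective g) :
    homDim k α Y ≤ homDim k α X + homDim k α Z :=
  finrank_hom_le_add (RestrictMK.map_exact α hfg) (RestrictMK.map_surjective α hg)

theorem homDim_eq_add_iff_lTensor_injective (hfg : Function.Exact f g)
    (hg : Function.Surjective g) :
    homDim k α Y = homDim k α X + homDim k α Z ↔
      Function.Injective ((RestrictMK.map α f).lTensor K) :=
  finrank_hom_eq_add_iff_lTensor_injective (RestrictMK.map_exact α hfg)
    (RestrictMK.map_surjective α hg)

variable (k X Y) in
theorem homDim_prod : homDim k α (X × Y) = homDim k α X + homDim k α Y := by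
  rw [homDim_eq_add_iff_lTensor_injective α .inl_snd LinearMap.snd_surjective]
  have hretract : RestrictMK.map α (.fst (MonoidAlgebra k G) X Y) ∘ₗ
      RestrictMK.map α (.inl (MonoidAlgebra k G) X Y) = .id :=
    RestrictMK.map_comp_map_eq_id α (LinearMap.fst_comp_inl ..)
  refine Function.LeftInverse.injective
    (g := (RestrictMK.map α (.fst (MonoidAlgebra k G) X Y)).lTensor K) fun x ↦ ?_
  rw [← LinearMap.lTensor_comp_apply, hretract, LinearMap.lTensor_id_apply]

theorem isSubadditive_homDim : IsSubadditive (MonoidAlgebra k G) (homDim k α) :=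
  ⟨fun _ _ _ _ _ _ _ _ e ↦ homDim_eq_of_linearEquiv α e,
    fun X Y _ _ _ _ _ _ ↦ homDim_prod k α X Y,
    fun _ _ _ _ _ _ _ _ _ _ _ _ _ _ hfg hg ↦ homDim_le_add α hfg hg⟩

theorem homDim_eq_add_of_flat [Module.Flat B (RestrictMK k α Z)] (hf : Function.Injective f)
    (hfg : Function.Exact f g) (hg : Function.Surjective g) :
    homDim k α Y = homDim k α X + homDim k α Z :=
  (homDim_eq_add_iff_lTensor_injective α hfg hg).2 <|
    LinearMap.lTensor_injective_of_exact_of_flat _ (RestrictMK.map_surjective α hg)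
      _ (RestrictMK.map_injective α hf) (RestrictMK.map_exact α hfg) K

theorem free_of_memAdloc [IsLocalRing B] (hK : Function.Surjective (algebraMap B K))
    [Module.Flat B (RestrictAlong α (MonoidAlgebra K G))]
    (hZ : MemAdloc (MonoidAlgebra k G) (homDim k α) Z) : Module.Free B (RestrictMK k α Z) := by
  obtain ⟨hfin, hadd⟩ := hZ
  obtain ⟨n, g, hg⟩ := Module.Finite.exists_fin' (MonoidAlgebra k G) Z
  have : IsNoetherianRing (MonoidAlgebra k G) := .of_finite k _
  have hexact : Function.Exact (LinearMap.ker g).subtype g := g.exact_subtype_ker_map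
  have hdim := hadd _ _ inferInstance inferInstance _ g (Submodule.injective_subtype _) hexact hg
  have : Module.Flat B (RestrictMK k α (Fin n → MonoidAlgebra k G)) := RestrictMK.flat_of_free α
  exact free_of_lTensor_injective hK (RestrictMK.map_exact α hexact)
    (RestrictMK.map_surjective α hg) ((homDim_eq_add_iff_lTensor_injective α hexact hg).1 hdim.symm)

end RestrictMK

theorem statement10_general {k K G : Type} {B : Type*} [Field k] [Field K] [Algebra k K] [Group G]
    [Finite G] [CommRing B] [IsLocalRing B] [Algebra K B] [Algebra B K]
    (hK : Function.Surjective (algebraMap B K)) (α : B →ₐ[K] MonoidAlgebra K G)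
    [Module.Flat B (RestrictAlong α (MonoidAlgebra K G))] :
    IsSubadditive (MonoidAlgebra k G) (homDim k α) ∧
    ∀ (M : Type) [AddCommGroup M] [Module (MonoidAlgebra k G) M],
      MemAdloc (MonoidAlgebra k G) (homDim k α) M ↔
        Module.Finite (MonoidAlgebra k G) M ∧ Module.Projective B (RestrictMK k α M) := by
  refine ⟨isSubadditive_homDim α, fun M _ _ ↦ ⟨fun hM ↦ ⟨hM.1, ?_⟩, fun ⟨hfin, _⟩ ↦ ⟨hfin, ?_⟩⟩⟩
  · have := free_of_memAdloc α hK hM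
    infer_instance
  · intro X Y _ _ _ _ _ _ f g hf hfg hg
    exact (homDim_eq_add_of_flat α hf hfg hg).symm

section TruncatedPolynomial

variable {K : Type} [Field K] {p : ℕ}

theorem resB_surjective (hp : p ≠ 0) : Function.Surjective (resB K p hp) :=
  fun c ↦ ⟨algebraMap K _ c, (resB K p hp).commutes c⟩

theorem ker_resB_le_nilradical (hp : p ≠ 0) : RingHom.ker (resB K p hp) ≤ nilradical (Bp K p) := by
  intro b hb
  obtain ⟨q, rfl⟩ := AdjoinRoot.mk_surjective b
  have hroot : q.IsRoot 0 := by
    simpa [RingHom.mem_ker, resB, AdjoinRoot.liftAlgHom_mk, eval₂_eq_eval_map, Algebra.ofId]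
      using hb
  have hdvd : X ∣ q := by simpa using dvd_iff_isRoot.2 hroot
  refine mem_nilradical.2 ⟨p, ?_⟩
  rw [← map_pow, AdjoinRoot.mk_eq_zero]
  exact pow_dvd_pow_of_dvd hdvd p

theorem isLocalRing_Bp (hp : p ≠ 0) : IsLocalRing (Bp K p) :=
  have := isLocalHom_of_ker_le_nilradical (resB K p hp).toRingHom (resB_surjective hp)
    (ker_resB_le_nilradical hp)
  RingHom.domain_isLocalRing (resB K p hp).toRingHom

end TruncatedPolynomial

/-- For a π-point `α : K[t]/(t^p) → KG` (a flat `K`-algebra map), the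
function `χ_α` is subadditive on finite dimensional `kG`-modules and its additive locus
is `Thick(α) = { M : α^*(M ⊗_k K) is projective }`. -/
theorem statement10 (k K G : Type) [Field k] [Field K] [Algebra k K] [Group G] [Finite G]
    (p : ℕ) [CharP k p] (hp : 0 < p)
    (α : Bp K p →ₐ[K] MonoidAlgebra K G)
    (hflat : letI : Module (Bp K p) (MonoidAlgebra K G) := Module.compHom _ α.toRingHom
      Module.Flat (Bp K p) (MonoidAlgebra K G)) :
    IsSubadditive (MonoidAlgebra k G) (chiAlpha k K G p hp.ne' α) ∧
    ∀ (M : Type) [AddCommGroup M] [Module (MonoidAlgebra k G) M],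
      MemAdloc (MonoidAlgebra k G) (chiAlpha k K G p hp.ne' α) M ↔
        MemThick k K G p α M := by
  let _ : Algebra (Bp K p) K := (resB K p hp.ne').toRingHom.toAlgebra
  have : IsLocalRing (Bp K p) := isLocalRing_Bp hp.ne'
  have : Module.Flat (Bp K p) (RestrictAlong α (MonoidAlgebra K G)) := hflat
  exact statement10_general (resB_surjective hp.ne') α
end
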